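/- Let n be a positive integer, let 0 ≤ k ≤ 1, and let λ = (λ_a, 1^{λ_l − 1}) be a hook partition with λ_l ≤ λ_a ≤ k+n and λ ≠ λ^t. Then the skew Schur functions s_{S(λ^t,k,n)} and s_{S(λ,k,n)} are NOT equal upon restricting to n+2 variables, i.e. after setting x_{n+3} = x_{n+4} = ⋯ = 0. -/

import Mathlib

/-!
The two skew Schur functions are separated by one explicit monomial.

*Stripping.* In a semistandard tableau every `1` is the top of its column. If the number of `1`s
equals the number of columns, then all column tops are `1`, and removing them leaves an arbitrary
tableau of the shape with its column tops deleted (`SSYTcount_strip`). So if two shapes have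
equally many columns and their stripped shapes differ in `m` variables, the shapes differ in
`m + 1` variables (`Differ.of_strip`). One strip turns the case `k = 0` into a translate of the
case `k = 1` with `n - 1` in place of `n`. In the case `k = 1` the shapes for a hook and its
transpose keep equally many columns, so with `la = t + 2` one may strip `t` times (`Ks_reduce`).

*Reduced shapes.* What remains is a rotated staircase of size `N = n - t ≥ 1`, with bottom left
entry `b`, two more cells with entries `u` and `v`, and, if `t ≥ 1` and `ll = t + 1`, one isolated
cell. For the transposed hook `u`, `v` form a detached column, so the condition is `u < v`; for the
hook itself they form a row with `v` below `b`, so the conditions are `u ≤ v` and `b < v`.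
After cancelling the fillings with `u < v` and `b < v`, one has to compare the number of fillings
with `u < v ≤ b` to the number with `b < u = v`.

*Comparison.* Take the content `(N, …, 2, 1, 1, 1)`, with one more `1` if there is an isolated
cell. It contains as many `1`s as possible, so the positions of the `1`s are forced.
Deleting them turns the first set into the fillings of the next smaller staircase, with bottom left
entry `b'`, with `u ≤ v ≤ b'` (`step_lt`), and the second into those with `u = v` (`step_eq`).
The fillings with `u = v ≤ b'` cancel, and the same comparison remains for size `N - 1`.
For size `0` and content `(1, 1)` the counts are `1` and `0`, so the difference is always `1`
(`core`). The content uses `N + 2` letters, and the `t` strips bring this to `n + 2`.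
-/

/-- The cells of the rotated staircase `Δ_n`, realized as the skew diagram
`(n^n)/δ_{n-1}`, placed in rows `0,…,n-1` and columns `k,…,n+k-1`
(each row right-justified; the row of length `i+1` is row `i`). -/
def staircaseCells (n k : ℕ) : Set (ℕ × ℕ) :=
  {p | p.1 < n ∧ k + n - 1 - p.1 ≤ p.2 ∧ p.2 < n + k}

/-- The cells of the foundation `λ/δ_{k-1}`, placed in rows `n, n+1, …`;
row `n + i` contains the cells of row `i` of `λ/δ_{k-1}`. -/
def foundationCells (lam : ℕ → ℕ) (k n : ℕ) : Set (ℕ × ℕ) :=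
  {p | n ≤ p.1 ∧ k - 1 - (p.1 - n) ≤ p.2 ∧ p.2 < lam (p.1 - n)}

/-- The staircase with bad foundation `𝒮(λ,k,n)`: the foundation `λ/δ_{k-1}`
is placed immediately below `Δ_n`, extending `k` columns to its left, so that
rows overlap in exactly `λ₁ - k` columns. -/
def SBF (lam : ℕ → ℕ) (k n : ℕ) : Set (ℕ × ℕ) :=
  staircaseCells n k ∪ foundationCells lam k n

/-- `T` is a semistandard Young tableau of shape `D`: positive entries on `D`,
zero outside `D`, rows weakly increasing, columns strictly increasing. -/
def IsSSYT (D : Set (ℕ × ℕ)) (T : ℕ × ℕ → ℕ) : Prop :=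
  (∀ p ∈ D, 0 < T p) ∧ (∀ p, p ∉ D → T p = 0) ∧
  (∀ i j1 j2, j1 ≤ j2 → (i, j1) ∈ D → (i, j2) ∈ D → T (i, j1) ≤ T (i, j2)) ∧
  (∀ i1 i2 j, i1 < i2 → (i1, j) ∈ D → (i2, j) ∈ D → T (i1, j) < T (i2, j))

/-- The set of cells of `D` read up to (and including) cell `q`, when rows are
read right to left, from the top row to the bottom row. -/
def readUpTo (D : Set (ℕ × ℕ)) (q : ℕ × ℕ) : Set (ℕ × ℕ) :=
  {p ∈ D | p.1 < q.1 ∨ (p.1 = q.1 ∧ q.2 ≤ p.2)}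

/-- The reading word of `T` is lattice: at every point while reading, for each
`v ≥ 1` the number of `v+1`'s read so far never exceeds the number of `v`'s. -/
def IsLattice (D : Set (ℕ × ℕ)) (T : ℕ × ℕ → ℕ) : Prop :=
  ∀ q ∈ D, ∀ v, 1 ≤ v →
    ({p ∈ readUpTo D q | T p = v + 1}).ncard ≤ ({p ∈ readUpTo D q | T p = v}).ncard

/-- The number of entries of `T` (on the shape `D`) equal to `v`. -/
noncomputable def contentOf (D : Set (ℕ × ℕ)) (T : ℕ × ℕ → ℕ) (v : ℕ) : ℕ :=
  ({p ∈ D | T p = v}).ncard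

/-- The number of SSYT of shape `D` with lattice reading word and content `ν`
(`ν v` = number of entries equal to `v`, for `v ≥ 1`).  By the
Littlewood-Richardson rule this is the coefficient of the Schur function `s_ν`
in the skew Schur function `s_D`. -/
noncomputable def LRcount (D : Set (ℕ × ℕ)) (nu : ℕ → ℕ) : ℕ :=
  {T : ℕ × ℕ → ℕ | IsSSYT D T ∧ IsLattice D T ∧ ∀ v, 1 ≤ v → contentOf D T v = nu v}.ncard

/-- The number of SSYT of shape `D` with content `α`.  For `α` supported on
`{1,…,m}` this is the coefficient of the monomial `x^α` in the skew Schur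
polynomial `s_D(x_1,…,x_m)`; hence `s_{D₁} = s_{D₂}` in `m` variables iff
`SSYTcount D₁ α = SSYTcount D₂ α` for all such `α`. -/
noncomputable def SSYTcount (D : Set (ℕ × ℕ)) (alpha : ℕ → ℕ) : ℕ :=
  {T : ℕ × ℕ → ℕ | IsSSYT D T ∧ ∀ v, 1 ≤ v → contentOf D T v = alpha v}.ncard

/-- `lam` is a partition, recorded as its weakly decreasing, eventually zero
sequence of row lengths: `lam i` is the length of row `i+1`. -/
def IsPartition (lam : ℕ → ℕ) : Prop :=
  (∀ i j, i ≤ j → lam j ≤ lam i) ∧ ∃ N, ∀ i, N ≤ i → lam i = 0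

/-- The hook partition `(a, 1^{l-1})` with arm (first row) of length `a` and
leg (first column) of length `l`. -/
def hookFun (a l : ℕ) : ℕ → ℕ := fun i => if i = 0 then a else if i < l then 1 else 0

/-! ### Stripping the column tops -/

/-- The cells of `D` whose upper neighbour also lies in `D`. When the columns of `D` are
intervals, this is `D` with the top cell of every column removed. -/
def strip (D : Set (ℕ × ℕ)) : Set (ℕ × ℕ) :=
  {p | p ∈ D ∧ 1 ≤ p.1 ∧ (p.1 - 1, p.2) ∈ D}

/-- The skew Schur functions of `D₁` and `D₂` differ in `m` variables. -/
def Differ (m : ℕ) (D₁ D₂ : Set (ℕ × ℕ)) : Prop :=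
  ∃ alpha : ℕ → ℕ, (∀ v, m < v → alpha v = 0) ∧ SSYTcount D₁ alpha ≠ SSYTcount D₂ alpha

theorem one_subset_tops {D : Set (ℕ × ℕ)} {T : ℕ × ℕ → ℕ} (hT : IsSSYT D T) :
    {p | p ∈ D ∧ T p = 1} ⊆ D \ strip D := by
  rintro p ⟨hp, h1⟩
  refine ⟨hp, fun hs => ?_⟩
  obtain ⟨-, h2, h3⟩ := hs
  have h4 := hT.2.2.2 (p.1 - 1) p.1 p.2 (by omega) h3 hp
  have h5 := hT.1 _ h3
  have h6 : T (p.1, p.2) = 1 := h1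
  omega

/-- If the number of `1`s is the number of columns of a skew shape, the `1`s fill the tops of
all columns, and deleting them leaves an arbitrary tableau of the stripped shape. -/
theorem SSYTcount_strip {D : Set (ℕ × ℕ)} (hfin : D.Finite) (hD : D.OrdConnected)
    (alpha : ℕ → ℕ) (h1 : alpha 1 = (D \ strip D).ncard) :
    SSYTcount D alpha = SSYTcount (strip D) (fun v => alpha (v + 1)) := by
  classical
  unfold SSYTcount
  have hone : ∀ T, IsSSYT D T → (∀ v, 1 ≤ v → contentOf D T v = alpha v) →
      ∀ p, p ∈ D → p ∉ strip D → T p = 1 := by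
    intro T hT hc p hp hps
    have := Set.eq_of_subset_of_ncard_le (one_subset_tops hT)
      (by rw [← h1, ← hc 1 le_rfl]; rfl) (hfin.subset Set.sdiff_subset)
    have h2 : p ∈ {p | p ∈ D ∧ T p = 1} := by rw [this]; exact ⟨hp, hps⟩
    exact h2.2
  have hgt : ∀ T, IsSSYT D T → ∀ p, p ∈ strip D → 2 ≤ T p := by
    intro T hT p hp
    by_contra hlt
    have h3 := hT.1 p hp.1
    exact (one_subset_tops hT (a := p) ⟨hp.1, by omega⟩).2 hp
  refine Set.ncard_congr (fun T _ => fun p => T p - 1) ?_ ?_ ?_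
  · rintro T ⟨hT, hc⟩
    refine ⟨⟨?_, ?_, ?_, ?_⟩, ?_⟩
    · intro p hp; have := hgt T hT p hp; show 0 < T p - 1; omega
    · intro p hp
      show T p - 1 = 0
      by_cases h : p ∈ D
      · rw [hone T hT hc p h hp]
      · rw [hT.2.1 p h]
    · intro i j1 j2 hj ha hb
      have := hT.2.2.1 i j1 j2 hj ha.1 hb.1
      show T _ - 1 ≤ T _ - 1; omega
    · intro i1 i2 j hi ha hb
      have := hT.2.2.2 i1 i2 j hi ha.1 hb.1
      have := hgt T hT _ ha
      show T _ - 1 < T _ - 1; omega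
    · intro v hv
      show _ = alpha (v + 1)
      rw [← hc (v + 1) (by omega)]
      unfold contentOf
      congr 1
      ext p
      constructor
      · rintro ⟨hp, h⟩
        have h : T p - 1 = v := h
        exact ⟨hp.1, by omega⟩
      · rintro ⟨hp, h⟩
        refine ⟨?_, ?_⟩
        · by_contra hs
          have := hone T hT hc p hp hs
          omega
        · show T p - 1 = v; omega
  · rintro T S ⟨hT, -⟩ ⟨hS, -⟩ h
    funext p
    have h' : T p - 1 = S p - 1 := congrFun h p
    by_cases hp : p ∈ D
    · have := hT.1 p hp; have := hS.1 p hp; omega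
    · rw [hT.2.1 p hp, hS.2.1 p hp]
  · rintro T ⟨hT, hc⟩
    have hsub : strip D ⊆ D := fun p hp => hp.1
    have e1 : ∀ p, p ∈ strip D →
        (if p ∈ strip D then T p + 1 else if p ∈ D then 1 else 0) = T p + 1 :=
      fun p hp => if_pos hp
    have e2 : ∀ p, p ∈ D → p ∉ strip D →
        (if p ∈ strip D then T p + 1 else if p ∈ D then 1 else 0) = 1 :=
      fun p hp hs => by rw [if_neg hs, if_pos hp]
    refine ⟨fun p => if p ∈ strip D then T p + 1 else if p ∈ D then 1 else 0,
      ⟨⟨?_, ?_, ?_, ?_⟩, ?_⟩, ?_⟩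
    · intro p hp
      show 0 < ite _ _ _
      split_ifs <;> omega
    · intro p hp
      show ite _ _ _ = 0
      rw [if_neg (fun h => hp (hsub h)), if_neg hp]
    · intro i j1 j2 hj ha hb
      show ite _ _ _ ≤ ite _ _ _
      by_cases h : (i, j1) ∈ strip D
      · -- a cell to the right of a non-top cell is not a top cell, by convexity
        have h' : (i, j2) ∈ strip D := by
          refine ⟨hb, h.2.1, hD.out h.2.2 hb ⟨⟨le_rfl, hj⟩, ⟨?_, le_rfl⟩⟩⟩
          show i - 1 ≤ i; omega
        rw [e1 _ h, e1 _ h']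
        have := hT.2.2.1 i j1 j2 hj h h'
        omega
      · rw [e2 _ ha h]
        split_ifs <;> omega
    · intro i1 i2 j hi ha hb
      show ite _ _ _ < ite _ _ _
      have h' : (i2, j) ∈ strip D := by
        refine ⟨hb, ?_, hD.out ha hb ⟨⟨?_, le_rfl⟩, ⟨?_, le_rfl⟩⟩⟩
        · show 1 ≤ i2; omega
        · show i1 ≤ i2 - 1; omega
        · show i2 - 1 ≤ i2; omega
      rw [e1 _ h']
      by_cases h : (i1, j) ∈ strip D
      · rw [e1 _ h]
        have := hT.2.2.2 i1 i2 j hi h h'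
        omega
      · rw [e2 _ ha h]
        have := hT.1 _ h'
        omega
    · intro v hv
      rcases Nat.lt_or_ge 1 v with hv1 | hv1
      · have : contentOf (strip D) T (v - 1) = alpha (v - 1 + 1) := hc (v - 1) (by omega)
        have e : v - 1 + 1 = v := by omega
        rw [e] at this
        rw [← this]
        unfold contentOf
        congr 1
        ext p
        constructor
        · rintro ⟨hp, h⟩
          by_cases hs : p ∈ strip D
          · have h : ite _ _ _ = v := h
            rw [e1 _ hs] at h
            exact ⟨hs, by omega⟩
          · have h : ite _ _ _ = v := h
            rw [e2 _ hp hs] at h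
            omega
        · rintro ⟨hs, h⟩
          refine ⟨hsub hs, ?_⟩
          show ite _ _ _ = v
          rw [e1 _ hs]; omega
      · have hv : v = 1 := by omega
        subst hv
        rw [h1]
        unfold contentOf
        congr 1
        ext p
        constructor
        · rintro ⟨hp, h⟩
          refine ⟨hp, fun hs => ?_⟩
          have h : ite _ _ _ = 1 := h
          rw [e1 _ hs] at h
          have := hT.1 _ hs
          omega
        · rintro ⟨hp, hs⟩
          exact ⟨hp, e2 _ hp hs⟩
    · funext p
      show ite _ _ _ - 1 = T p
      by_cases hs : p ∈ strip D
      · rw [e1 _ hs]; rfl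
      · rw [if_neg hs, hT.2.1 p hs]
        split_ifs <;> rfl

theorem Differ.of_strip {m : ℕ} {D₁ D₂ : Set (ℕ × ℕ)} (h1 : D₁.Finite) (h2 : D₂.Finite)
    (o1 : D₁.OrdConnected) (o2 : D₂.OrdConnected)
    (ht : (D₁ \ strip D₁).ncard = (D₂ \ strip D₂).ncard)
    (h : Differ m (strip D₁) (strip D₂)) : Differ (m + 1) D₁ D₂ := by
  obtain ⟨beta, hb, hne⟩ := h
  refine ⟨fun v => if v = 1 then (D₁ \ strip D₁).ncard else beta (v - 1), ?_, ?_⟩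
  · intro v hv
    show ite _ _ _ = 0
    rw [if_neg (by omega), hb _ (by omega)]
  · set alpha : ℕ → ℕ := fun v => if v = 1 then (D₁ \ strip D₁).ncard else beta (v - 1)
      with halpha
    have ha1 : alpha 1 = (D₁ \ strip D₁).ncard := if_pos rfl
    rw [SSYTcount_strip h1 o1 _ ha1, SSYTcount_strip h2 o2 _ (ha1.trans ht)]
    -- contents only matter at positive letters
    have key : ∀ D, SSYTcount D (fun v => alpha (v + 1)) = SSYTcount D beta := by
      intro D
      unfold SSYTcount
      congr 1
      ext T
      refine and_congr_right fun _ => forall_congr' fun v => forall_congr' fun hv => ?_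
      have : alpha (v + 1) = beta v := by
        show ite _ _ _ = _
        rw [if_neg (by omega), Nat.add_sub_cancel]
      exact this ▸ Iff.rfl
    rw [key, key]
    exact hne

/-! ### The shapes under stripping -/

/-- The `s`-fold strip of `𝒮((a, 1^{l-1}), 1, n)`, with the first row of the foundation in
row `c`. -/
def Ks (c n a l s : ℕ) : Set (ℕ × ℕ) :=
  {p | (1 ≤ p.2 ∧ p.2 ≤ n ∧ c + s ≤ p.1 + p.2 ∧ p.1 < c) ∨
    (p.1 = c ∧ 1 ≤ p.2 ∧ p.2 < a ∧ s ≤ p.2) ∨ (p.2 = 0 ∧ c + s ≤ p.1 ∧ p.1 < c + l)}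

theorem strip_Ks {c n a l s : ℕ} (hc : n ≤ c) (ha : a ≤ n + 1) :
    strip (Ks c n a l s) = Ks c n a l (s + 1) := by
  ext ⟨i, j⟩
  simp only [strip, Ks, Set.mem_ofPred_eq]
  omega

theorem Ks_finite (c n a l s : ℕ) : (Ks c n a l s).Finite := by
  refine ((Set.finite_Iio (c + l + 1)).prod (Set.finite_Iio (n + a + 1))).subset ?_
  rintro ⟨i, j⟩ h
  simp only [Ks, Set.mem_ofPred_eq] at h
  simp only [Set.mem_prod, Set.mem_Iio]
  omega

theorem Ks_ordConnected {c n a l s : ℕ} (ha : a ≤ n + 1) : (Ks c n a l s).OrdConnected := by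
  refine ⟨?_⟩
  rintro ⟨i, j⟩ h1 ⟨i', j'⟩ h2 ⟨x, y⟩ ⟨h3, h4⟩
  simp only [Ks, Set.mem_ofPred_eq, Prod.mk_le_mk] at *
  omega

/-- After fewer than `la` strips, both shapes have equally many columns: exchanging the cells
`(c, s)` and `(c + s, 0)` matches the column tops of one with those of the other. -/
theorem Ks_tops_ncard {c n la ll s : ℕ} (hc : n ≤ c) (h : ll < la) (hla : la ≤ n + 1)
    (hll : 1 ≤ ll) (hs : s < la) :
    (Ks c n ll la s \ strip (Ks c n ll la s)).ncard =
      (Ks c n la ll s \ strip (Ks c n la ll s)).ncard := by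
  rw [strip_Ks hc (by omega), strip_Ks hc hla]
  rw [← Set.ncard_image_of_injective _ (Equiv.swap (c, s) (c + s, 0)).injective]
  congr 1
  ext ⟨i, j⟩
  rw [Equiv.image_eq_preimage_symm, Equiv.symm_swap, Set.mem_preimage, Equiv.swap_apply_def]
  split_ifs with h1 h2
  · simp only [Ks, Set.mem_sdiff, Set.mem_ofPred_eq, Prod.mk.injEq, true_and] at *
    omega
  · simp only [Ks, Set.mem_sdiff, Set.mem_ofPred_eq, Prod.mk.injEq, true_and] at *
    omega
  · simp only [Ks, Set.mem_sdiff, Set.mem_ofPred_eq, Prod.mk.injEq] at *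
    omega

theorem Ks_reduce {c n la ll t : ℕ} (hc : n ≤ c) (h : ll < la) (hla : la ≤ n + 1)
    (hll : 1 ≤ ll) (ht : t < la) (m : ℕ) (hd : Differ m (Ks c n ll la t) (Ks c n la ll t)) :
    Differ (m + t) (Ks c n ll la 0) (Ks c n la ll 0) := by
  induction t generalizing m with
  | zero => exact hd
  | succ t ih =>
    have := ih (by omega) (m + 1) (Differ.of_strip (Ks_finite ..) (Ks_finite ..)
      (Ks_ordConnected (by omega)) (Ks_ordConnected hla)
      (Ks_tops_ncard hc h hla hll (by omega))
      (by rw [strip_Ks hc (by omega), strip_Ks hc hla]; exact hd))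
    rwa [show m + (t + 1) = m + 1 + t by omega]

theorem SBF_one (n a l : ℕ) (hl : 1 ≤ l) (ha : 1 ≤ a) :
    SBF (hookFun a l) 1 n = Ks n n a l 0 := by
  ext ⟨i, j⟩
  simp only [SBF, staircaseCells, foundationCells, hookFun, Ks, Set.mem_union, Set.mem_ofPred_eq]
  split_ifs <;> omega

theorem strip_SBF_zero (n a l : ℕ) (hl : 1 ≤ l) (ha : 1 ≤ a) (han : a ≤ n + 1) :
    strip (SBF (hookFun a l) 0 (n + 1)) = Ks (n + 1) n a l 0 := by
  ext ⟨i, j⟩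
  simp only [strip, SBF, staircaseCells, foundationCells, hookFun, Ks, Set.mem_union,
    Set.mem_ofPred_eq]
  split_ifs <;> omega

theorem SBF_zero_finite (n a l : ℕ) : (SBF (hookFun a l) 0 n).Finite := by
  refine ((Set.finite_Iio (n + l + 1)).prod (Set.finite_Iio (n + a + 1))).subset ?_
  rintro ⟨i, j⟩ h
  simp only [SBF, staircaseCells, foundationCells, hookFun, Set.mem_union,
    Set.mem_ofPred_eq] at h
  simp only [Set.mem_prod, Set.mem_Iio]
  split_ifs at h <;> omega

theorem SBF_zero_ordConnected (n a l : ℕ) (ha : 1 ≤ a) (han : a ≤ n) :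
    (SBF (hookFun a l) 0 n).OrdConnected := by
  refine ⟨?_⟩
  rintro ⟨i, j⟩ h1 ⟨i', j'⟩ h2 ⟨x, y⟩ ⟨h3, h4⟩
  simp only [SBF, staircaseCells, foundationCells, hookFun, Set.mem_union,
    Set.mem_ofPred_eq, Prod.mk_le_mk] at *
  split_ifs at * <;> omega

theorem SBF_zero_tops (n a l : ℕ) (ha : 1 ≤ a) (han : a ≤ n) :
    SBF (hookFun a l) 0 n \ strip (SBF (hookFun a l) 0 n) = {p | p.1 + p.2 + 1 = n} := by
  ext ⟨i, j⟩
  simp only [strip, SBF, staircaseCells, foundationCells, hookFun, Set.mem_union,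
    Set.mem_ofPred_eq, Set.mem_sdiff]
  split_ifs <;> omega

/-! ### Staircases and their leftmost cells -/

/-- `1` if `u = x` and `0` otherwise: the content of a single entry `u`. -/
def ind (u x : ℕ) : ℕ := if u = x then 1 else 0

theorem ind_self (u : ℕ) : ind u u = 1 := if_pos rfl

theorem ind_ne {u x : ℕ} (h : u ≠ x) : ind u x = 0 := if_neg h

theorem ind_le (u x : ℕ) : ind u x ≤ 1 := by
  unfold ind; split_ifs <;> omega

theorem ind_succ (u x : ℕ) : ind (u + 1) (x + 1) = ind u x := by
  unfold ind; split_ifs <;> omega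

theorem contentOf_union {A B : Set (ℕ × ℕ)} (hA : A.Finite) (hB : B.Finite)
    (h : Disjoint A B) (T : ℕ × ℕ → ℕ) (x : ℕ) :
    contentOf (A ∪ B) T x = contentOf A T x + contentOf B T x := by
  unfold contentOf
  rw [← Set.ncard_union_eq _ (hA.subset fun p hp => hp.1) (hB.subset fun p hp => hp.1)]
  · congr 1
    ext p
    exact or_and_right
  · exact h.mono (fun p hp => hp.1) (fun p hp => hp.1)

theorem contentOf_congr {A : Set (ℕ × ℕ)} {T S : ℕ × ℕ → ℕ} {x y : ℕ}
    (h : ∀ p ∈ A, (T p = x ↔ S p = y)) : contentOf A T x = contentOf A S y := by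
  unfold contentOf
  congr 1
  ext p
  exact and_congr_right fun hp => h p hp

theorem contentOf_eq_zero {A : Set (ℕ × ℕ)} {T : ℕ × ℕ → ℕ} {x : ℕ}
    (h : ∀ p ∈ A, T p ≠ x) : contentOf A T x = 0 := by
  unfold contentOf
  rw [show {p ∈ A | T p = x} = ∅ from ?_, Set.ncard_empty]
  ext p
  exact ⟨fun hp => h p hp.1 hp.2, fun hp => hp.elim⟩

theorem contentOf_const {A : Set (ℕ × ℕ)} {T : ℕ × ℕ → ℕ} {x : ℕ}
    (h : ∀ p ∈ A, T p = x) : contentOf A T x = A.ncard := by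
  unfold contentOf
  congr 1
  ext p
  exact ⟨fun hp => hp.1, fun hp => ⟨hp, h p hp⟩⟩

theorem contentOf_singleton (p : ℕ × ℕ) (T : ℕ × ℕ → ℕ) (x : ℕ) :
    contentOf {p} T x = ind (T p) x := by
  by_cases h : T p = x
  · rw [contentOf_const (by rintro q rfl; exact h), Set.ncard_singleton, h, ind_self]
  · rw [contentOf_eq_zero (by rintro q rfl; exact h), ind_ne h]

/-- The `t`-fold strip of the rotated staircase with columns `1, …, n` whose bottom row is row
`c - 1`: a rotated staircase of size `n - t`, with bottom left cell `(c - 1, t + 1)`. -/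
def Tri (c n t : ℕ) : Set (ℕ × ℕ) :=
  {p | 1 ≤ p.2 ∧ p.2 ≤ n ∧ c + t ≤ p.1 + p.2 ∧ p.1 < c}

/-- The leftmost cells of the rows of `Tri c n t` other than the bottom row. -/
def Rim (c n t : ℕ) : Set (ℕ × ℕ) :=
  {p | t + 2 ≤ p.2 ∧ p.2 ≤ n ∧ p.1 + p.2 = c + t}

theorem Tri_finite (c n t : ℕ) : (Tri c n t).Finite := by
  refine ((Set.finite_Iio (c + 1)).prod (Set.finite_Iio (n + 1))).subset ?_
  rintro ⟨i, j⟩ h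
  simp only [Tri, Set.mem_ofPred_eq] at h
  simp only [Set.mem_prod, Set.mem_Iio]
  omega

theorem Rim_subset {c n t : ℕ} : Rim c n t ⊆ Tri c n t := by
  rintro ⟨i, j⟩ h
  simp only [Rim, Tri, Set.mem_ofPred_eq] at *
  omega

theorem Rim_ncard {c n t : ℕ} (hc : n ≤ c) : (Rim c n t).ncard = n - t - 1 := by
  have : Rim c n t = (fun j => (c + t - j, j)) '' (Finset.Icc (t + 2) n : Finset ℕ) := by
    ext ⟨i, j⟩
    simp only [Rim, Set.mem_ofPred_eq, Set.mem_image, Finset.coe_Icc, Set.mem_Icc, Prod.mk.injEq]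
    constructor
    · intro h
      exact ⟨j, by omega, by omega, rfl⟩
    · rintro ⟨j', h⟩
      omega
  rw [this, Set.ncard_image_of_injective _ (fun a b h => (Prod.mk.inj h).2),
    Set.ncard_coe_finset, Nat.card_Icc]
  omega

theorem mem_Tri_iff {c n t : ℕ} (hc : n ≤ c) (ht : t < n) (p : ℕ × ℕ) :
    p ∈ Tri c n t ↔ p ∈ Tri c n (t + 1) ∨ p ∈ Rim c n t ∨ p = (c - 1, t + 1) := by
  obtain ⟨i, j⟩ := p
  simp only [Rim, Tri, Set.mem_ofPred_eq, Prod.mk.injEq]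
  omega

theorem Rim_disjoint {c n t : ℕ} (p : ℕ × ℕ) : p ∈ Rim c n t → p ∉ Tri c n (t + 1) := by
  obtain ⟨i, j⟩ := p
  simp only [Rim, Tri, Set.mem_ofPred_eq]
  omega

theorem corner_notMem_Rim {c n t : ℕ} : (c - 1, t + 1) ∉ Rim c n t := by
  simp only [Rim, Set.mem_ofPred_eq]
  omega

theorem corner_notMem_Tri {c n t : ℕ} :
    (c - 1, t + 1) ∉ Tri c n (t + 1) := by
  simp only [Tri, Set.mem_ofPred_eq]
  omega

theorem corner_mem_Tri {c n t : ℕ} (hc : n ≤ c) (ht : t < n) : (c - 1, t + 1) ∈ Tri c n t := by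
  simp only [Tri, Set.mem_ofPred_eq]
  omega

theorem contentOf_Tri {c n t : ℕ} (hc : n ≤ c) (ht : t < n) (T : ℕ × ℕ → ℕ) (x : ℕ) :
    contentOf (Tri c n t) T x = contentOf (Tri c n (t + 1)) T x + contentOf (Rim c n t) T x +
      ind (T (c - 1, t + 1)) x := by
  have h : Tri c n t = (Tri c n (t + 1) ∪ Rim c n t) ∪ {(c - 1, t + 1)} := by
    ext p
    rw [mem_Tri_iff hc ht, ← or_assoc]
    rfl
  have hR : (Rim c n t).Finite := (Tri_finite c n t).subset Rim_subset
  rw [h, contentOf_union ((Tri_finite _ _ _).union hR) (Set.finite_singleton _),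
    contentOf_union (Tri_finite _ _ _) hR, contentOf_singleton]
  · exact Set.disjoint_left.2 fun p hp hp' => Rim_disjoint p hp' hp
  · refine Set.disjoint_singleton_right.2 ?_
    rintro (h | h)
    · exact corner_notMem_Tri h
    · exact corner_notMem_Rim h

theorem two_le_of_mem {c n t : ℕ} (hc : n ≤ c) {T : ℕ × ℕ → ℕ} (hT : IsSSYT (Tri c n t) T)
    (p : ℕ × ℕ) (hp : p ∈ Tri c n (t + 1)) : 2 ≤ T p := by
  obtain ⟨i, j⟩ := p
  have h1 : (i, j) ∈ Tri c n t ∧ 1 ≤ i ∧ (i - 1, j) ∈ Tri c n t := by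
    simp only [Tri, Set.mem_ofPred_eq] at *
    omega
  have := hT.1 _ h1.2.2
  have := hT.2.2.2 (i - 1) i j (by omega) h1.2.2 h1.1
  omega

/-- For a tableau `T` of the smaller staircase `Tri c n (t + 1)`, the filling of `Tri c n t` with
entries `T + 1` on the smaller staircase, `d` in the bottom left cell, and `1` on the rim. -/
noncomputable def lift (c n t : ℕ) (T : ℕ × ℕ → ℕ) (d : ℕ) (p : ℕ × ℕ) : ℕ :=
  open Classical in
  if p ∈ Tri c n (t + 1) then T p + 1 else if p = (c - 1, t + 1) then d
  else if p ∈ Rim c n t then 1 else 0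

/-- The filling `T - 1` restricted to the smaller staircase `Tri c n (t + 1)`. -/
noncomputable def lower (c n t : ℕ) (T : ℕ × ℕ → ℕ) (p : ℕ × ℕ) : ℕ :=
  open Classical in if p ∈ Tri c n (t + 1) then T p - 1 else 0

section lift
variable {c n t : ℕ} {T : ℕ × ℕ → ℕ} {d : ℕ}

theorem lift_tri {p : ℕ × ℕ} (hp : p ∈ Tri c n (t + 1)) : lift c n t T d p = T p + 1 :=
  if_pos hp

theorem lift_corner : lift c n t T d (c - 1, t + 1) = d := by
  unfold lift
  rw [if_neg corner_notMem_Tri, if_pos rfl]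

theorem lift_rim {p : ℕ × ℕ} (hp : p ∈ Rim c n t) : lift c n t T d p = 1 := by
  unfold lift
  rw [if_neg (Rim_disjoint p hp), if_neg (fun h => corner_notMem_Rim (h ▸ hp)), if_pos hp]

theorem lift_ssyt (hc : n ≤ c) (ht : t < n) (hT : IsSSYT (Tri c n (t + 1)) T) (hd : 1 ≤ d)
    (hd' : t + 1 < n → d ≤ T (c - 1, t + 1 + 1) + 1) : IsSSYT (Tri c n t) (lift c n t T d) := by
  refine ⟨?_, ?_, ?_, ?_⟩
  · intro p hp
    rcases (mem_Tri_iff hc ht p).1 hp with h | h | h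
    · rw [lift_tri h]; omega
    · rw [lift_rim h]; omega
    · rw [h, lift_corner]; omega
  · intro p hp
    rw [mem_Tri_iff hc ht] at hp
    push Not at hp
    unfold lift
    rw [if_neg hp.1, if_neg hp.2.2, if_neg hp.2.1]
  · intro i j1 j2 hj ha hb
    rcases hj.eq_or_lt with rfl | hj
    · exact le_rfl
    have h2 : (i, j2) ∈ Tri c n (t + 1) := by
      simp only [Tri, Set.mem_ofPred_eq] at *
      omega
    rw [lift_tri h2]
    rcases (mem_Tri_iff hc ht _).1 ha with h | h | h
    · rw [lift_tri h]
      have := hT.2.2.1 i j1 j2 hj.le h h2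
      omega
    · rw [lift_rim h]; omega
    · rw [h, lift_corner]
      obtain ⟨rfl, rfl⟩ := Prod.mk.inj h
      have h3 : (c - 1, t + 1 + 1) ∈ Tri c n (t + 1) := by
        simp only [Tri, Set.mem_ofPred_eq] at *
        omega
      have h4 : t + 1 < n := by
        simp only [Tri, Set.mem_ofPred_eq] at *
        omega
      have := hT.2.2.1 (c - 1) (t + 1 + 1) j2 (by omega) h3 h2
      have := hd' h4
      omega
  · intro i1 i2 j hi ha hb
    have h2 : (i2, j) ∈ Tri c n (t + 1) := by
      simp only [Tri, Set.mem_ofPred_eq] at *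
      omega
    rw [lift_tri h2]
    rcases (mem_Tri_iff hc ht _).1 ha with h | h | h
    · rw [lift_tri h]
      have := hT.2.2.2 i1 i2 j hi h h2
      omega
    · rw [lift_rim h]
      have := hT.1 _ h2
      omega
    · -- nothing lies below the bottom left cell
      obtain ⟨rfl, rfl⟩ := Prod.mk.inj h
      simp only [Tri, Set.mem_ofPred_eq] at *
      omega

theorem lower_ssyt (hc : n ≤ c) (hT : IsSSYT (Tri c n t) T) :
    IsSSYT (Tri c n (t + 1)) (lower c n t T) := by
  have hsub : ∀ p, p ∈ Tri c n (t + 1) → p ∈ Tri c n t := by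
    rintro ⟨i, j⟩ h
    simp only [Tri, Set.mem_ofPred_eq] at *
    omega
  refine ⟨?_, ?_, ?_, ?_⟩
  · intro p hp
    have := two_le_of_mem hc hT p hp
    rw [lower, if_pos hp]; omega
  · intro p hp
    rw [lower, if_neg hp]
  · intro i j1 j2 hj ha hb
    have := hT.2.2.1 i j1 j2 hj (hsub _ ha) (hsub _ hb)
    rw [lower, lower, if_pos ha, if_pos hb]; omega
  · intro i1 i2 j hi ha hb
    have := hT.2.2.2 i1 i2 j hi (hsub _ ha) (hsub _ hb)
    have := two_le_of_mem hc hT _ ha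
    rw [lower, lower, if_pos ha, if_pos hb]; omega

theorem lower_lift (hT : IsSSYT (Tri c n (t + 1)) T) : lower c n t (lift c n t T d) = T := by
  funext p
  by_cases hp : p ∈ Tri c n (t + 1)
  · rw [lower, if_pos hp, lift_tri hp]; rfl
  · rw [lower, if_neg hp, hT.2.1 p hp]

theorem lift_lower (hc : n ≤ c) (ht : t < n) (hT : IsSSYT (Tri c n t) T)
    (h1 : ∀ p ∈ Rim c n t, T p = 1) : lift c n t (lower c n t T) (T (c - 1, t + 1)) = T := by
  funext p
  by_cases hp : p ∈ Tri c n t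
  · rcases (mem_Tri_iff hc ht p).1 hp with h | h | h
    · have := two_le_of_mem hc hT p h
      rw [lift_tri h, lower, if_pos h]; omega
    · rw [lift_rim h, h1 p h]
    · rw [h, lift_corner]
  · rw [hT.2.1 p hp]
    rw [mem_Tri_iff hc ht] at hp
    push Not at hp
    unfold lift
    rw [if_neg hp.1, if_neg hp.2.2, if_neg hp.2.1]

theorem content_lift_succ (hc : n ≤ c) (ht : t < n) {x : ℕ} (hx : 1 ≤ x) :
    contentOf (Tri c n t) (lift c n t T d) (x + 1) =
      contentOf (Tri c n (t + 1)) T x + ind d (x + 1) := by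
  rw [contentOf_Tri hc ht, lift_corner,
    contentOf_eq_zero (A := Rim c n t) (fun p hp => by rw [lift_rim hp]; omega),
    contentOf_congr (S := T) (y := x) (fun p hp => by rw [lift_tri hp]; omega)]
  rfl

theorem content_lift_one (hc : n ≤ c) (ht : t < n) (hT : IsSSYT (Tri c n (t + 1)) T) :
    contentOf (Tri c n t) (lift c n t T d) 1 = n - t - 1 + ind d 1 := by
  rw [contentOf_Tri hc ht, lift_corner,
    contentOf_const (A := Rim c n t) (fun p hp => lift_rim hp), Rim_ncard hc,
    contentOf_eq_zero (fun p hp => by rw [lift_tri hp]; have := hT.1 p hp; omega), zero_add]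

/-- The entries `1` of a tableau of staircase shape lie on the rim or in the corner. -/
theorem content_one (hc : n ≤ c) (ht : t < n) (hT : IsSSYT (Tri c n t) T) :
    contentOf (Tri c n t) T 1 = contentOf (Rim c n t) T 1 + ind (T (c - 1, t + 1)) 1 := by
  rw [contentOf_Tri hc ht,
    contentOf_eq_zero (fun p hp => by have := two_le_of_mem hc hT p hp; omega), zero_add]

theorem content_rim_le (hc : n ≤ c) : contentOf (Rim c n t) T 1 ≤ n - t - 1 := by
  rw [← Rim_ncard hc]
  exact Set.ncard_le_ncard (fun p hp => hp.1) ((Tri_finite c n t).subset Rim_subset)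

theorem rim_eq_one (hc : n ≤ c) (h : contentOf (Rim c n t) T 1 = n - t - 1) :
    ∀ p ∈ Rim c n t, T p = 1 := by
  intro p hp
  have hfin := (Tri_finite c n t).subset (Rim_subset (c := c) (n := n) (t := t))
  have h1 : {p | p ∈ Rim c n t ∧ T p = 1} = Rim c n t :=
    Set.eq_of_subset_of_ncard_le (fun p hp => hp.1)
      (by rw [Rim_ncard hc, ← h]; rfl) hfin
  rw [← h1] at hp
  exact hp.2

end lift

/-! ### Counting quadruples -/

/-- Quadruples `(T, u, v, w)`: a tableau `T` of shape `Tri c n t` together with separate entries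
`u`, `v` and, if `W` holds, `w` (otherwise `w = 0`), of total content `α`, subject to `rel T u v`. -/
def Quad (c n t : ℕ) (W : Prop) (α : ℕ → ℕ) (rel : (ℕ × ℕ → ℕ) → ℕ → ℕ → Prop) :
    Set ((ℕ × ℕ → ℕ) × ℕ × ℕ × ℕ) :=
  {q | IsSSYT (Tri c n t) q.1 ∧ 0 < q.2.1 ∧ 0 < q.2.2.1 ∧ (0 < q.2.2.2 ↔ W) ∧
    (∀ x, 1 ≤ x → contentOf (Tri c n t) q.1 x + ind q.2.1 x + ind q.2.2.1 x + ind q.2.2.2 x = α x) ∧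
    rel q.1 q.2.1 q.2.2.1}

/-- `v` is at most the bottom left entry of `T`, where that entry counts as infinite if the
staircase is empty (`t = n`). -/
def LeB (c n t : ℕ) (T : ℕ × ℕ → ℕ) (v : ℕ) : Prop := t < n → v ≤ T (c - 1, t + 1)

open Classical in
/-- `1` if there is an extra entry, `0` otherwise. -/
noncomputable def wt (W : Prop) : ℕ := if W then 1 else 0

theorem wt_pos_iff (W : Prop) : 0 < wt W ↔ W := by
  unfold wt; split_ifs with h <;> simp [h]

theorem ind_wt_one (W : Prop) : ind (wt W) 1 = wt W := by
  unfold wt ind; split_ifs <;> simp_all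

theorem wt_false : wt False = 0 := if_neg id

theorem ind_le_wt {W : Prop} {w : ℕ} (hw : 0 < w ↔ W) : ind w 1 ≤ wt W := by
  unfold wt ind; split_ifs <;> simp_all

theorem eq_wt_of_ind {W : Prop} {w : ℕ} (hw : 0 < w ↔ W) (h : ind w 1 = wt W) : w = wt W := by
  unfold wt ind at *; split_ifs at * <;> simp_all

section step
variable {c n t : ℕ} {W : Prop} {α : ℕ → ℕ}

/-- If `1` occurs as often as possible, then `u < v ≤ b` (with `b` the bottom left entry) forces
`u = 1` and `1`s on the whole rim. Deleting them makes `v ≤ b` an arbitrary weakly increasing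
pair bounded by the bottom left entry of the next smaller staircase. -/
theorem step_lt (hc : n ≤ c) (ht : t < n) (h1 : α 1 = n - t + wt W) :
    (Quad c n (t + 1) False (fun x => α (x + 1))
      (fun T u v => u ≤ v ∧ LeB c n (t + 1) T v)).ncard =
    (Quad c n t W α (fun T u v => u < v ∧ LeB c n t T v)).ncard := by
  refine Set.ncard_congr (fun q _ => (lift c n t q.1 (q.2.2.1 + 1), 1, q.2.1 + 1, wt W)) ?_ ?_ ?_
  · rintro ⟨T, u, v, w⟩ ⟨hT, hu, hv, hw, hcont, huv, hle⟩
    dsimp only at *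
    have hw0 : w = 0 := by by_contra h; exact hw.1 (by omega)
    refine ⟨lift_ssyt hc ht hT (by omega) (fun h => by have := hle h; omega), one_pos,
      Nat.succ_pos u, wt_pos_iff W, ?_, ?_, fun _ => ?_⟩
    · intro x hx
      dsimp only
      rcases hx.eq_or_lt with rfl | hx
      · rw [content_lift_one hc ht hT, h1, ind_wt_one, ind_self, ind_ne (by omega),
          ind_ne (by omega)]
        omega
      · obtain ⟨x, rfl⟩ : ∃ y, x = y + 1 := ⟨x - 1, by omega⟩
        have h2 : ind (wt W) (x + 1) = 0 := by
          apply ind_ne; unfold wt; split_ifs <;> omega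
        have h3 := hcont x (by omega)
        rw [hw0, ind_ne (by omega : (0 : ℕ) ≠ x)] at h3
        rw [content_lift_succ hc ht (by omega), ind_succ v, ind_succ u, h2,
          ind_ne (by omega : 1 ≠ x + 1)]
        omega
    · show 1 < u + 1; omega
    · show u + 1 ≤ lift c n t T (v + 1) (c - 1, t + 1)
      rw [lift_corner]; omega
  · rintro ⟨T, u, v, w⟩ ⟨T', u', v', w'⟩ ⟨hT, -, -, hw, -⟩ ⟨hT', -, -, hw', -⟩ h
    dsimp only at *
    simp only [Prod.mk.injEq] at h
    obtain ⟨h2, -, h3, -⟩ := h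
    have e1 : T = T' := by rw [← lower_lift hT, h2, lower_lift hT']
    have e2 := congrFun h2 (c - 1, t + 1)
    rw [lift_corner, lift_corner] at e2
    have hw0 : w = 0 := by by_contra h; exact hw.1 (by omega)
    have hw0' : w' = 0 := by by_contra h; exact hw'.1 (by omega)
    simp only [Prod.mk.injEq]
    exact ⟨e1, by omega, by omega, by omega⟩
  · rintro ⟨T, u, v, w⟩ ⟨hT, hu, hv, hw, hcont, huv, hle⟩
    dsimp only at *
    have hb := hle ht
    have c1 := hcont 1 le_rfl
    rw [content_one hc ht hT, h1, ind_ne (by omega : v ≠ 1),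
      ind_ne (by omega : T (c - 1, t + 1) ≠ 1)] at c1
    have c2 := content_rim_le (T := T) (t := t) hc
    have c3 := ind_le u 1
    have c4 := ind_le_wt hw
    have hu1 : u = 1 := by
      by_contra h
      rw [ind_ne h] at c1
      omega
    have hrim := rim_eq_one (T := T) (t := t) hc (by omega)
    have hw1 : w = wt W := eq_wt_of_ind hw (by omega)
    have hl := lift_lower hc ht hT hrim
    refine ⟨(lower c n t T, v - 1, T (c - 1, t + 1) - 1, 0),
      ⟨lower_ssyt hc hT, ?_, ?_, by simp, ?_, ?_, ?_⟩, ?_⟩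
    · show 0 < v - 1; omega
    · show 0 < T _ - 1; omega
    · intro x hx
      dsimp only
      have h3 := hcont (x + 1) (by omega)
      rw [← hl, content_lift_succ hc ht hx] at h3
      have h2 : ind w (x + 1) = 0 := by
        apply ind_ne; rw [hw1]; unfold wt; split_ifs <;> omega
      rw [h2, ind_ne (by omega : u ≠ x + 1)] at h3
      rw [← ind_succ (v - 1), ← ind_succ (T _ - 1), ind_ne (by omega : 0 ≠ x),
        show v - 1 + 1 = v by omega,
        show T (c - 1, t + 1) - 1 + 1 = T (c - 1, t + 1) by omega]
      omega
    · show v - 1 ≤ T _ - 1; omega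
    · intro h
      show T _ - 1 ≤ lower c n t T (c - 1, t + 1 + 1)
      have h3 : (c - 1, t + 1 + 1) ∈ Tri c n (t + 1) := corner_mem_Tri hc h
      have h4 : (c - 1, t + 1 + 1) ∈ Tri c n t := (mem_Tri_iff hc ht _).2 (Or.inl h3)
      rw [lower, if_pos h3]
      have := hT.2.2.1 (c - 1) (t + 1) (t + 1 + 1) (by omega) (corner_mem_Tri hc ht) h4
      omega
    · dsimp only
      rw [show T (c - 1, t + 1) - 1 + 1 = T (c - 1, t + 1) by omega, hl, hu1, hw1,
        show v - 1 + 1 = v by omega]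

/-- If `1` occurs as often as possible, then `b < u = v` (with `b` the bottom left entry) forces
`1`s in all leftmost cells, and deleting them leaves no condition besides `u = v`. -/
theorem step_eq (hc : n ≤ c) (ht : t < n) (h1 : α 1 = n - t + wt W) :
    (Quad c n (t + 1) False (fun x => α (x + 1)) (fun _ u v => u = v)).ncard =
    (Quad c n t W α (fun T u v => u = v ∧ ¬ LeB c n t T v)).ncard := by
  refine Set.ncard_congr (fun q _ => (lift c n t q.1 1, q.2.1 + 1, q.2.2.1 + 1, wt W)) ?_ ?_ ?_
  · rintro ⟨T, u, v, w⟩ ⟨hT, hu, hv, hw, hcont, huv⟩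
    dsimp only at *
    have hw0 : w = 0 := by by_contra h; exact hw.1 (by omega)
    refine ⟨lift_ssyt hc ht hT le_rfl (fun h => by omega), Nat.succ_pos u,
      Nat.succ_pos v, wt_pos_iff W, ?_, ?_, fun hle => ?_⟩
    · intro x hx
      dsimp only
      rcases hx.eq_or_lt with rfl | hx
      · rw [content_lift_one hc ht hT, h1, ind_wt_one, ind_self, ind_ne (by omega),
          ind_ne (by omega)]
        omega
      · obtain ⟨x, rfl⟩ : ∃ y, x = y + 1 := ⟨x - 1, by omega⟩
        have h2 : ind (wt W) (x + 1) = 0 := by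
          apply ind_ne; unfold wt; split_ifs <;> omega
        have h3 := hcont x (by omega)
        rw [hw0, ind_ne (by omega : (0 : ℕ) ≠ x)] at h3
        rw [content_lift_succ hc ht (by omega), ind_succ v, ind_succ u, h2,
          ind_ne (by omega : 1 ≠ x + 1)]
        omega
    · show u + 1 = v + 1; omega
    · have hle : v + 1 ≤ lift c n t T 1 (c - 1, t + 1) := hle ht
      rw [lift_corner] at hle; omega
  · rintro ⟨T, u, v, w⟩ ⟨T', u', v', w'⟩ ⟨hT, -, -, hw, -⟩ ⟨hT', -, -, hw', -⟩ h
    dsimp only at *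
    simp only [Prod.mk.injEq] at h
    obtain ⟨h2, h3, h4, -⟩ := h
    have e1 : T = T' := by rw [← lower_lift hT, h2, lower_lift hT']
    have hw0 : w = 0 := by by_contra h; exact hw.1 (by omega)
    have hw0' : w' = 0 := by by_contra h; exact hw'.1 (by omega)
    simp only [Prod.mk.injEq]
    exact ⟨e1, by omega, by omega, by omega⟩
  · rintro ⟨T, u, v, w⟩ ⟨hT, hu, hv, hw, hcont, huv, hle⟩
    dsimp only at *
    have hb : T (c - 1, t + 1) < v := by
      by_contra h
      exact hle fun _ => by omega
    have hb0 := hT.1 _ (corner_mem_Tri hc ht)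
    have c1 := hcont 1 le_rfl
    rw [content_one hc ht hT, h1, ind_ne (by omega : v ≠ 1), ind_ne (by omega : u ≠ 1)] at c1
    have c2 := content_rim_le (T := T) (t := t) hc
    have c3 := ind_le (T (c - 1, t + 1)) 1
    have c4 := ind_le_wt hw
    have hb1 : T (c - 1, t + 1) = 1 := by
      by_contra h
      rw [ind_ne h] at c1
      omega
    have hrim := rim_eq_one (T := T) (t := t) hc (by omega)
    have hw1 : w = wt W := eq_wt_of_ind hw (by omega)
    have hl := lift_lower hc ht hT hrim
    rw [hb1] at hl
    refine ⟨(lower c n t T, u - 1, v - 1, 0),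
      ⟨lower_ssyt hc hT, ?_, ?_, by simp, ?_, ?_⟩, ?_⟩
    · show 0 < u - 1; omega
    · show 0 < v - 1; omega
    · intro x hx
      dsimp only
      have h3 := hcont (x + 1) (by omega)
      rw [← hl, content_lift_succ hc ht hx] at h3
      have h2 : ind w (x + 1) = 0 := by
        apply ind_ne; rw [hw1]; unfold wt; split_ifs <;> omega
      rw [h2, ind_ne (by omega : 1 ≠ x + 1)] at h3
      rw [← ind_succ (v - 1), ← ind_succ (u - 1), ind_ne (by omega : 0 ≠ x),
        show v - 1 + 1 = v by omega, show u - 1 + 1 = u by omega]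
      omega
    · show u - 1 = v - 1; omega
    · dsimp only
      rw [hl, hw1, show v - 1 + 1 = v by omega, show u - 1 + 1 = u by omega]

end step

theorem le_of_content {D : Set (ℕ × ℕ)} (hD : D.Finite) {T : ℕ × ℕ → ℕ} {m : ℕ}
    (h : ∀ x, m < x → contentOf D T x = 0) (p : ℕ × ℕ) (hp : p ∈ D) : T p ≤ m := by
  by_contra hlt
  have h1 := h (T p) (by omega)
  unfold contentOf at h1
  rw [Set.ncard_eq_zero (hD.subset fun q hq => hq.1)] at h1
  exact (Set.mem_empty_iff_false p).1 (h1 ▸ ⟨hp, rfl⟩)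

theorem finite_fillings {D : Set (ℕ × ℕ)} (hD : D.Finite) (m : ℕ) :
    {T : ℕ × ℕ → ℕ | (∀ p ∈ D, T p ≤ m) ∧ ∀ p ∉ D, T p = 0}.Finite := by
  have : Finite D := hD
  have h2 : {f : D → ℕ | ∀ p, f p ∈ Set.Iic m}.Finite := Set.Finite.pi' fun _ => Set.finite_Iic m
  refine Set.Finite.of_injOn (f := fun T (p : D) => T p) ?_ ?_ h2
  · rintro T ⟨h, -⟩ p
    exact h p p.2
  · rintro T ⟨-, h⟩ S ⟨-, h'⟩ e
    funext p
    by_cases hp : p ∈ D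
    · exact congrFun e ⟨p, hp⟩
    · rw [h p hp, h' p hp]

theorem Quad_finite (c n t : ℕ) (W : Prop) (α : ℕ → ℕ) (m : ℕ) (hα : ∀ x, m < x → α x = 0)
    (rel : (ℕ × ℕ → ℕ) → ℕ → ℕ → Prop) : (Quad c n t W α rel).Finite := by
  refine ((finite_fillings (Tri_finite c n t) m).prod ((Set.finite_Iic m).prod
    ((Set.finite_Iic m).prod (Set.finite_Iic m)))).subset ?_
  rintro ⟨T, u, v, w⟩ ⟨hT, hu, hv, hw, hcont, -⟩
  dsimp only at *
  have key : ∀ y, m < y → contentOf (Tri c n t) T y + ind u y + ind v y + ind w y = 0 :=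
    fun y hy => by rw [hcont y (by omega), hα y hy]
  refine ⟨⟨?_, hT.2.1⟩, ?_, ?_, ?_⟩
  · exact le_of_content (T := T) (Tri_finite c n t) fun x hx => by have := key x hx; omega
  · by_contra h
    have := key u (by simpa using h)
    rw [ind_self] at this; omega
  · by_contra h
    have := key v (by simpa using h)
    rw [ind_self] at this; omega
  · by_contra h
    have := key w (by simpa using h)
    rw [ind_self] at this; omega

/-- Splitting a set of quadruples along two mutually exclusive relations. -/
theorem Quad_split {c n t : ℕ} {W : Prop} {α : ℕ → ℕ} {m : ℕ} (hα : ∀ x, m < x → α x = 0)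
    {r r₁ r₂ : (ℕ × ℕ → ℕ) → ℕ → ℕ → Prop} (h : ∀ T u v, r T u v ↔ r₁ T u v ∨ r₂ T u v)
    (h' : ∀ T u v, r₁ T u v → ¬ r₂ T u v) :
    (Quad c n t W α r).ncard = (Quad c n t W α r₁).ncard + (Quad c n t W α r₂).ncard := by
  rw [← Set.ncard_union_eq _ (Quad_finite c n t W α m hα _) (Quad_finite c n t W α m hα _)]
  · congr 1
    ext q
    simp only [Quad, Set.mem_union, Set.mem_ofPred_eq, h]
    tauto
  · refine Set.disjoint_left.2 ?_
    rintro q ⟨-, -, -, -, -, h1⟩ ⟨-, -, -, -, -, h2⟩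
    exact h' _ _ _ h1 h2

/-- The content `(N, N - 1, …, 2, 1, 1, 1)`. -/
def stairContent (N x : ℕ) : ℕ :=
  if x = 0 then 0 else if x ≤ N then N + 1 - x else if x ≤ N + 2 then 1 else 0

/-- The content `(N, N - 1, …, 2, 1, 1, 1)`, with one more `1` if `W` holds. -/
noncomputable def stairContentW (N : ℕ) (W : Prop) (x : ℕ) : ℕ :=
  stairContent N x + if x = 1 then wt W else 0

/-- For the staircase content, the quadruples with `u < v ≤ b` outnumber those with `b < u = v`
by exactly one. After `step_lt` and `step_eq` the quadruples with `u = v ≤ b` occur on both sides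
and cancel, which leaves the same claim for the next smaller staircase; for the empty staircase
the only quadruple has `u = 1` and `v = 2`. -/
theorem core (c N : ℕ) : ∀ (n t : ℕ) (W : Prop), n ≤ c → n = t + N → (W → 0 < N) →
    (Quad c n t W (stairContentW N W) (fun T u v => u < v ∧ LeB c n t T v)).ncard =
    (Quad c n t W (stairContentW N W) (fun T u v => u = v ∧ ¬ LeB c n t T v)).ncard + 1 := by
  induction N with
  | zero =>
    intro n t W hc hn hW
    have hW : ¬ W := fun h => absurd (hW h) (by omega)
    have hwt : wt W = 0 := if_neg hW
    have hempty : Tri c n t = ∅ := by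
      ext ⟨i, j⟩
      simp only [Tri, Set.mem_ofPred_eq, Set.mem_empty_iff_false, iff_false]
      omega
    have e2 : Quad c n t W (stairContentW 0 W) (fun T u v => u = v ∧ ¬ LeB c n t T v) = ∅ := by
      ext q
      refine ⟨?_, fun h => h.elim⟩
      rintro ⟨-, -, -, -, -, -, h⟩
      exact h fun h => by omega
    have e1 : Quad c n t W (stairContentW 0 W) (fun T u v => u < v ∧ LeB c n t T v) =
        {(fun _ => 0, 1, 2, 0)} := by
      ext ⟨T, u, v, w⟩
      rw [Set.mem_singleton_iff]
      constructor
      · rintro ⟨hT, hu, hv, hw, hcont, huv, -⟩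
        dsimp only at *
        have hw0 : w = 0 := by by_contra h; exact hW (hw.1 (by omega))
        have hT0 : T = fun _ => 0 := by
          funext p
          exact hT.2.1 p (by rw [hempty]; exact id)
        have k1 := hcont v hv
        have hv2 : v ≤ 2 := by
          by_contra h
          rw [ind_self] at k1
          simp only [stairContentW, stairContent] at k1
          split_ifs at k1 <;> omega
        rw [hT0, hw0, show v = 2 by omega, show u = 1 by omega]
      · intro h
        simp only [Prod.mk.injEq] at h
        obtain ⟨rfl, rfl, rfl, rfl⟩ := h
        refine ⟨?_, by simp, by simp, by simp [hW], ?_, by simp, fun h => by omega⟩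
        · rw [hempty]
          exact ⟨fun _ h => h.elim, fun _ _ => rfl, fun _ _ _ _ h => h.elim,
            fun _ _ _ _ h => h.elim⟩
        · intro x hx
          rw [hempty, contentOf_eq_zero (fun _ h => h.elim)]
          simp only [ind, stairContentW, stairContent, hwt]
          split_ifs <;> omega
    rw [e1, e2, Set.ncard_singleton, Set.ncard_empty]
  | succ N ih =>
    intro n t W hc hn hW
    have ht : t < n := by omega
    have h1 : stairContentW (N + 1) W 1 = n - t + wt W := by
      grind [stairContentW, stairContent]
    have hsupp : ∀ x, N + 2 < x → (fun x => stairContentW (N + 1) W (x + 1)) x = 0 := by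
      intro x hx
      grind [stairContentW, stairContent]
    rw [← step_lt hc ht h1, ← step_eq hc ht h1]
    rw [Quad_split hsupp (r₁ := fun T u v => u < v ∧ LeB c n (t + 1) T v)
        (r₂ := fun T u v => u = v ∧ LeB c n (t + 1) T v)
        (fun T u v => by rw [le_iff_lt_or_eq]; tauto) (fun T u v h h' => by omega),
      Quad_split hsupp (r := fun _ u v => u = v)
        (r₁ := fun T u v => u = v ∧ ¬ LeB c n (t + 1) T v)
        (r₂ := fun T u v => u = v ∧ LeB c n (t + 1) T v)
        (fun T u v => by tauto) (fun T u v h h' => h.2 h'.2)]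
    have hshift : ∀ r, Quad c n (t + 1) False (fun x => stairContentW (N + 1) W (x + 1)) r =
        Quad c n (t + 1) False (stairContentW N False) r := by
      intro r
      ext q
      have : ∀ x, 1 ≤ x → stairContentW (N + 1) W (x + 1) = stairContentW N False x := by
        intro x hx
        grind [stairContentW, stairContent, wt_false]
      simp only [Quad, Set.mem_ofPred_eq]
      refine and_congr_right fun _ => and_congr_right fun _ => and_congr_right fun _ =>
        and_congr_right fun _ => and_congr_left fun _ => forall_congr' fun x =>
        forall_congr' fun hx => ?_
      rw [this x hx]
    rw [hshift, hshift, hshift, ih n (t + 1) False hc (by omega) False.elim]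
    omega

/-! ### The fully reduced shapes -/

open Classical in
/-- The restriction of a filling to `A`, extended by `0`. -/
noncomputable def restr (A : Set (ℕ × ℕ)) (T : ℕ × ℕ → ℕ) (p : ℕ × ℕ) : ℕ :=
  if p ∈ A then T p else 0

theorem restr_mem {A : Set (ℕ × ℕ)} {T : ℕ × ℕ → ℕ} {p : ℕ × ℕ} (hp : p ∈ A) :
    restr A T p = T p := if_pos hp

/-- The staircase `Tri c n t` together with two cells `P`, `Q` and, if `W` holds, a third
cell `R`. -/
def ExtTri (c n t : ℕ) (W : Prop) (P Q R : ℕ × ℕ) : Set (ℕ × ℕ) :=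
  {p | p ∈ Tri c n t ∨ p = P ∨ p = Q ∨ (W ∧ p = R)}

theorem contentOf_ExtTri {c n t : ℕ} {W : Prop} {P Q R : ℕ × ℕ} (hP : P ∉ Tri c n t)
    (hQ : Q ∉ Tri c n t) (hR : R ∉ Tri c n t) (hPQ : P ≠ Q) (hRP : W → R ≠ P) (hRQ : W → R ≠ Q)
    (T : ℕ × ℕ → ℕ) {x : ℕ} (hx : 1 ≤ x) (w : ℕ) (hw : W → w = T R) (hw' : ¬ W → w = 0) :
    contentOf (ExtTri c n t W P Q R) T x =
      contentOf (Tri c n t) T x + ind (T P) x + ind (T Q) x + ind w x := by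
  by_cases hW : W
  · have h : ExtTri c n t W P Q R = ((Tri c n t ∪ {P}) ∪ {Q}) ∪ {R} := by
      ext p
      simp only [ExtTri, hW, true_and, Set.mem_ofPred_eq, Set.mem_union, Set.mem_singleton_iff]
      tauto
    have h1 := Tri_finite c n t
    rw [h, contentOf_union ((h1.union (Set.finite_singleton _)).union (Set.finite_singleton _))
        (Set.finite_singleton _), contentOf_union (h1.union (Set.finite_singleton _))
        (Set.finite_singleton _), contentOf_union h1 (Set.finite_singleton _),
      contentOf_singleton, contentOf_singleton, contentOf_singleton, hw hW]
    · exact Set.disjoint_singleton_right.2 hP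
    · exact Set.disjoint_singleton_right.2 (by simp [hQ, hPQ.symm])
    · exact Set.disjoint_singleton_right.2 (by simp [hR, hRP hW, hRQ hW])
  · have h : ExtTri c n t W P Q R = (Tri c n t ∪ {P}) ∪ {Q} := by
      ext p
      simp only [ExtTri, hW, false_and, Set.mem_ofPred_eq, Set.mem_union, Set.mem_singleton_iff]
      tauto
    have h1 := Tri_finite c n t
    rw [h, contentOf_union (h1.union (Set.finite_singleton _))
        (Set.finite_singleton _), contentOf_union h1 (Set.finite_singleton _),
      contentOf_singleton, contentOf_singleton, hw' hW, ind_ne (by omega : 0 ≠ x)]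
    · rfl
    · exact Set.disjoint_singleton_right.2 hP
    · exact Set.disjoint_singleton_right.2 (by simp [hQ, hPQ.symm])

/-- If the tableau conditions involving the cells `P`, `Q`, `R` amount to `rel`, then tableaux
on `ExtTri` correspond to quadruples. -/
theorem SSYTcount_ExtTri {c n t : ℕ} {W : Prop} {P Q R : ℕ × ℕ} (hP : P ∉ Tri c n t)
    (hQ : Q ∉ Tri c n t) (hR : R ∉ Tri c n t) (hPQ : P ≠ Q) (hRP : W → R ≠ P) (hRQ : W → R ≠ Q)
    (rel : (ℕ × ℕ → ℕ) → ℕ → ℕ → Prop) (α : ℕ → ℕ)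
    (h : ∀ T, (∀ p ∈ ExtTri c n t W P Q R, 0 < T p) → (∀ p ∉ ExtTri c n t W P Q R, T p = 0) →
      (IsSSYT (ExtTri c n t W P Q R) T ↔
        IsSSYT (Tri c n t) (restr (Tri c n t) T) ∧ rel (restr (Tri c n t) T) (T P) (T Q))) :
    SSYTcount (ExtTri c n t W P Q R) α = (Quad c n t W α rel).ncard := by
  classical
  have mP : P ∈ ExtTri c n t W P Q R := Or.inr (Or.inl rfl)
  have mQ : Q ∈ ExtTri c n t W P Q R := Or.inr (Or.inr (Or.inl rfl))
  have mR : W → R ∈ ExtTri c n t W P Q R := fun hW => Or.inr (Or.inr (Or.inr ⟨hW, rfl⟩))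
  have hcont : ∀ (T : ℕ × ℕ → ℕ) (x : ℕ), 1 ≤ x → contentOf (ExtTri c n t W P Q R) T x =
      contentOf (Tri c n t) (restr (Tri c n t) T) x + ind (T P) x + ind (T Q) x +
        ind (if W then T R else 0) x := by
    intro T x hx
    rw [contentOf_ExtTri hP hQ hR hPQ hRP hRQ T hx (if W then T R else 0) (fun hW => if_pos hW)
      (fun hW => if_neg hW), contentOf_congr (S := restr (Tri c n t) T) (y := x)
      (fun p hp => by rw [restr_mem hp])]
  refine Set.ncard_congr (fun T _ => (restr (Tri c n t) T, T P, T Q, if W then T R else 0))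
    ?_ ?_ ?_
  · rintro T ⟨hT, hα⟩
    have h1 := (h T hT.1 hT.2.1).1 hT
    refine ⟨h1.1, hT.1 _ mP, hT.1 _ mQ, ?_, ?_, h1.2⟩
    · dsimp only
      split_ifs with hW
      · exact ⟨fun _ => hW, fun _ => hT.1 _ (mR hW)⟩
      · exact ⟨fun h => absurd h (lt_irrefl 0), fun h => absurd h hW⟩
    · intro x hx
      rw [← hα x hx, hcont T x hx]
  · rintro T S ⟨hT, -⟩ ⟨hS, -⟩ e
    simp only [Prod.mk.injEq] at e
    obtain ⟨e1, e2, e3, e4⟩ := e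
    funext p
    by_cases hp : p ∈ ExtTri c n t W P Q R
    · rcases hp with hp | rfl | rfl | ⟨hW, rfl⟩
      · rw [← restr_mem (T := T) hp, e1, restr_mem hp]
      · exact e2
      · exact e3
      · rwa [if_pos hW, if_pos hW] at e4
    · rw [hT.2.1 p hp, hS.2.1 p hp]
  · rintro ⟨T, u, v, w⟩ ⟨hT, hu, hv, hw, hα, hrel⟩
    dsimp only at *
    let S : ℕ × ℕ → ℕ := fun p => if p ∈ Tri c n t then T p else if p = P then u else
      if p = Q then v else if W ∧ p = R then w else 0
    have sT : restr (Tri c n t) S = T := by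
      funext p
      by_cases hp : p ∈ Tri c n t
      · rw [restr_mem hp]; exact if_pos hp
      · rw [hT.2.1 p hp]; exact if_neg hp
    have sP : S P = u := by simp [S, hP]
    have sQ : S Q = v := by simp [S, hQ, hPQ.symm]
    have sR : (if W then S R else 0) = w := by
      split_ifs with hW
      · simp [S, hR, hRP hW, hRQ hW, hW]
      · by_contra h0
        exact hW (hw.1 (by omega))
    have pos : ∀ p ∈ ExtTri c n t W P Q R, 0 < S p := by
      rintro p (hp | rfl | rfl | ⟨hW, rfl⟩)
      · rw [← restr_mem (T := S) hp, sT]; exact hT.1 p hp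
      · rwa [sP]
      · rwa [sQ]
      · rw [if_pos hW] at sR
        rw [sR]; exact hw.2 hW
    have zero : ∀ p ∉ ExtTri c n t W P Q R, S p = 0 := by
      intro p hp
      simp only [ExtTri, Set.mem_ofPred_eq, not_or] at hp
      simp only [S]
      rw [if_neg hp.1, if_neg hp.2.1, if_neg hp.2.2.1, if_neg hp.2.2.2]
    refine ⟨S, ⟨(h S pos zero).2 ⟨by rwa [sT], by rwa [sT, sP, sQ]⟩, ?_⟩, ?_⟩
    · intro x hx
      rw [hcont S x hx, sT, sP, sQ, sR, hα x hx]
    · simp only [sT, sP, sQ, sR]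

theorem IsSSYT.restr {A D : Set (ℕ × ℕ)} {T : ℕ × ℕ → ℕ} (hT : IsSSYT D T) (h : A ⊆ D) :
    IsSSYT A (restr A T) := by
  refine ⟨fun p hp => ?_, fun p hp => if_neg hp, fun i j1 j2 hj ha hb => ?_,
    fun i1 i2 j hi ha hb => ?_⟩
  · rw [restr_mem hp]; exact hT.1 p (h hp)
  · rw [restr_mem ha, restr_mem hb]; exact hT.2.2.1 i j1 j2 hj (h ha) (h hb)
  · rw [restr_mem ha, restr_mem hb]; exact hT.2.2.2 i1 i2 j hi (h ha) (h hb)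

section shapes
variable {c n ll t : ℕ}

theorem Ks_vertical (hlt : ll < t + 2) :
    Ks c n ll (t + 2) t = ExtTri c n t (1 ≤ t ∧ ll = t + 1) (c + t, 0) (c + t + 1, 0) (c, t) := by
  ext ⟨i, j⟩
  simp only [Ks, ExtTri, Tri, Set.mem_ofPred_eq, Prod.mk.injEq]
  omega

theorem Ks_horizontal (hll : 1 ≤ ll) (hlt : ll < t + 2) :
    Ks c n (t + 2) ll t = ExtTri c n t (1 ≤ t ∧ ll = t + 1) (c, t) (c, t + 1) (c + t, 0) := by
  ext ⟨i, j⟩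
  simp only [Ks, ExtTri, Tri, Set.mem_ofPred_eq, Prod.mk.injEq]
  omega

/-- When the remaining cells of the leg are `(c + t, 0)` and `(c + t + 1, 0)`, they form a
separate column. -/
theorem count_vertical (hlt : ll < t + 2) (α : ℕ → ℕ) :
    SSYTcount (Ks c n ll (t + 2) t) α =
      (Quad c n t (1 ≤ t ∧ ll = t + 1) α (fun _ u v => u < v)).ncard := by
  rw [Ks_vertical hlt]
  refine SSYTcount_ExtTri ?_ ?_ ?_ ?_ ?_ ?_ _ α fun T pos zero => ⟨fun hT => ⟨?_, ?_⟩, ?_⟩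
  · simp only [Tri, Set.mem_ofPred_eq]; omega
  · simp only [Tri, Set.mem_ofPred_eq]; omega
  · simp only [Tri, Set.mem_ofPred_eq]; omega
  · simp only [ne_eq, Prod.mk.injEq]; omega
  · simp only [ne_eq, Prod.mk.injEq]; omega
  · simp only [ne_eq, Prod.mk.injEq]; omega
  · exact hT.restr fun p hp => Or.inl hp
  · exact hT.2.2.2 _ _ 0 (by omega) (Or.inr (Or.inl rfl)) (Or.inr (Or.inr (Or.inl rfl)))
  · rintro ⟨hT, huv⟩
    refine ⟨pos, zero, fun i j1 j2 hj ha hb => ?_, fun i1 i2 j hi ha hb => ?_⟩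
    · rcases hj.eq_or_lt with rfl | hj
      · exact le_rfl
      have h1 : (i, j1) ∈ Tri c n t ∧ (i, j2) ∈ Tri c n t := by
        simp only [ExtTri, Tri, Set.mem_ofPred_eq, Prod.mk.injEq] at *
        omega
      rw [← restr_mem (T := T) h1.1, ← restr_mem (T := T) h1.2]
      exact hT.2.2.1 i j1 j2 hj.le h1.1 h1.2
    · have h1 : ((i1, j) ∈ Tri c n t ∧ (i2, j) ∈ Tri c n t) ∨
          (i1 = c + t ∧ i2 = c + t + 1 ∧ j = 0) := by
        simp only [ExtTri, Tri, Set.mem_ofPred_eq, Prod.mk.injEq] at *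
        omega
      rcases h1 with h1 | ⟨rfl, rfl, rfl⟩
      · rw [← restr_mem (T := T) h1.1, ← restr_mem (T := T) h1.2]
        exact hT.2.2.2 i1 i2 j hi h1.1 h1.2
      · exact huv

/-- When the remaining cells of the arm are `(c, t)` and `(c, t + 1)`, they form a row whose
second cell lies below the bottom left cell of the staircase. -/
theorem count_horizontal (hc : n ≤ c) (ht : t < n) (hll : 1 ≤ ll) (hlt : ll < t + 2)
    (α : ℕ → ℕ) :
    SSYTcount (Ks c n (t + 2) ll t) α =
      (Quad c n t (1 ≤ t ∧ ll = t + 1) α (fun T u v => u ≤ v ∧ ¬ LeB c n t T v)).ncard := by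
  have hb := corner_mem_Tri hc ht
  rw [Ks_horizontal hll hlt]
  refine SSYTcount_ExtTri ?_ ?_ ?_ ?_ ?_ ?_ _ α
    fun T pos zero => ⟨fun hT => ⟨?_, ?_, fun hle => ?_⟩, ?_⟩
  · simp only [Tri, Set.mem_ofPred_eq]; omega
  · simp only [Tri, Set.mem_ofPred_eq]; omega
  · simp only [Tri, Set.mem_ofPred_eq]; omega
  · simp only [ne_eq, Prod.mk.injEq]; omega
  · simp only [ne_eq, Prod.mk.injEq]; omega
  · simp only [ne_eq, Prod.mk.injEq]; omega
  · exact hT.restr fun p hp => Or.inl hp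
  · exact hT.2.2.1 _ _ _ (by omega) (Or.inr (Or.inl rfl)) (Or.inr (Or.inr (Or.inl rfl)))
  · have h1 := hle ht
    rw [restr_mem hb] at h1
    have := hT.2.2.2 (c - 1) c (t + 1) (by omega) (Or.inl hb) (Or.inr (Or.inr (Or.inl rfl)))
    omega
  · rintro ⟨hT, huv, hle⟩
    have hbv : T (c - 1, t + 1) < T (c, t + 1) := by
      by_contra h
      exact hle fun _ => by rw [restr_mem hb]; omega
    refine ⟨pos, zero, fun i j1 j2 hj ha hb => ?_, fun i1 i2 j hi ha hb' => ?_⟩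
    · rcases hj.eq_or_lt with rfl | hj
      · exact le_rfl
      have h1 : ((i, j1) ∈ Tri c n t ∧ (i, j2) ∈ Tri c n t) ∨
          (i = c ∧ j1 = t ∧ j2 = t + 1) := by
        simp only [ExtTri, Tri, Set.mem_ofPred_eq, Prod.mk.injEq] at *
        omega
      rcases h1 with h1 | ⟨rfl, rfl, rfl⟩
      · rw [← restr_mem (T := T) h1.1, ← restr_mem (T := T) h1.2]
        exact hT.2.2.1 i j1 j2 hj.le h1.1 h1.2
      · exact huv
    · have h1 : ((i1, j) ∈ Tri c n t ∧ (i2, j) ∈ Tri c n t) ∨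
          (i1 = c - 1 ∧ i2 = c ∧ j = t + 1) := by
        simp only [ExtTri, Tri, Set.mem_ofPred_eq, Prod.mk.injEq] at *
        omega
      rcases h1 with h1 | ⟨rfl, rfl, rfl⟩
      · rw [← restr_mem (T := T) h1.1, ← restr_mem (T := T) h1.2]
        exact hT.2.2.2 i1 i2 j hi h1.1 h1.2
      · exact hbv

/-- The fully reduced shapes have different skew Schur functions: the tableaux with `u < v` and
`b < v` are common to both sides, and `core` compares the remaining ones. -/
theorem differ_reduced (hc : n ≤ c) (ht : t < n) (hll : 1 ≤ ll) (hlt : ll < t + 2) :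
    Differ (n - t + 2) (Ks c n ll (t + 2) t) (Ks c n (t + 2) ll t) := by
  have hsupp : ∀ x, n - t + 2 < x → stairContentW (n - t) (1 ≤ t ∧ ll = t + 1) x = 0 := by
    intro x hx
    grind [stairContentW, stairContent]
  refine ⟨_, hsupp, ?_⟩
  rw [count_vertical hlt, count_horizontal hc ht hll hlt,
    Quad_split hsupp (r := fun _ u v => u < v) (r₁ := fun T u v => u < v ∧ LeB c n t T v)
      (r₂ := fun T u v => u < v ∧ ¬ LeB c n t T v) (fun T u v => by tauto)
      (fun T u v h h' => h'.2 h.2),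
    Quad_split hsupp (r := fun T u v => u ≤ v ∧ ¬ LeB c n t T v)
      (r₁ := fun T u v => u = v ∧ ¬ LeB c n t T v)
      (r₂ := fun T u v => u < v ∧ ¬ LeB c n t T v)
      (fun T u v => by rw [le_iff_lt_or_eq]; tauto) (fun T u v h h' => by omega),
    core c (n - t) n t _ hc (by omega) (fun _ => by omega)]
  omega

end shapes

/-- The case `k = 1`, with the foundation moved to row `c`. -/
theorem differ_Ks {c n la ll : ℕ} (hc : n ≤ c) (hll : 1 ≤ ll) (h : ll < la) (hla : la ≤ n + 1) :
    Differ (n + 2) (Ks c n ll la 0) (Ks c n la ll 0) := by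
  obtain ⟨t, rfl⟩ : ∃ t, la = t + 2 := ⟨la - 2, by omega⟩
  have := Ks_reduce hc h hla hll (by omega) _ (differ_reduced hc (by omega : t < n) hll h)
  rwa [show n - t + 2 + t = n + 2 by omega] at this

/-- Let `n ≥ 1`, `0 ≤ k ≤ 1`, and let `λ = (λa, 1^{λl-1})`
be a hook with `λl ≤ λa ≤ k + n` and `λ ≠ λᵗ`.  Then `s_{𝒮(λᵗ,k,n)}` and
`s_{𝒮(λ,k,n)}` are NOT equal upon restricting to `n+2` variables: some
monomial coefficient (indexed by a content supported on `{1,…,n+2}`)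
differs. -/
theorem hook_transpose_ne_in_nPlusTwo_variables
    (n k la ll : ℕ) (hn : 1 ≤ n) (hk : k ≤ 1) (hll : 1 ≤ ll) (hlla : ll ≤ la)
    (hla : la ≤ k + n) (hne : hookFun la ll ≠ hookFun ll la) :
    ∃ alpha : ℕ → ℕ, (∀ v, n + 2 < v → alpha v = 0) ∧
      SSYTcount (SBF (hookFun ll la) k n) alpha ≠
      SSYTcount (SBF (hookFun la ll) k n) alpha := by
  have hlt : ll < la := lt_of_le_of_ne hlla (fun h => hne (by rw [h]))
  obtain rfl | rfl : k = 0 ∨ k = 1 := by omega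
  · obtain ⟨n, rfl⟩ : ∃ m, n = m + 1 := ⟨n - 1, by omega⟩
    refine Differ.of_strip (m := n + 2) (SBF_zero_finite ..) (SBF_zero_finite ..)
      (SBF_zero_ordConnected _ _ _ hll (by omega))
      (SBF_zero_ordConnected _ _ _ (by omega) (by omega)) ?_ ?_
    · rw [SBF_zero_tops _ _ _ hll (by omega), SBF_zero_tops _ _ _ (by omega) (by omega)]
    · rw [strip_SBF_zero _ _ _ (by omega) hll (by omega),
        strip_SBF_zero _ _ _ hll (by omega) (by omega)]
      exact differ_Ks (by omega) hll hlt (by omega)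
  · rw [SBF_one _ _ _ (by omega) hll, SBF_one _ _ _ hll (by omega)]
    exact differ_Ks le_rfl hll hlt (by omega)
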